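/- Let M, J ⊆ ℝ be open intervals, a ∈ M, and f : {x ∈ M | x > a} → ℝ a continuous function such that the closure of the image of f in J is compact. Let F̄ be the closure in M × J of the graph of f. Then for every vector bundle E over M × J with a connection ∇ of class C¹, every ∇-parallel C¹ section of E defined on (M × J) \ F̄ extends to a ∇-parallel section on all of M × J. -/

import Mathlib

open MeasureTheory Set

theorem curry_contDiff {F : Type*} [NormedAddCommGroup F] [NormedSpace ℝ F] [CompleteSpace F]
    {M J : Set ℝ} (hMo : IsOpen M) (hMc : M.OrdConnected) (hJo : IsOpen J) {a : ℝ} (ha : a ∈ M)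
    {y0 y1 : ℝ} (hJ : Icc y0 y1 ⊆ J) {A : ℝ × ℝ → F} (hA : ContDiffOn ℝ 1 A (M ×ˢ J)) :
    ∃ B : ℝ → C(Icc y0 y1, F), ContDiffOn ℝ 1 B M ∧ ∀ x ∈ M, ∀ y, B x y = A (x, y) := by
  classical
  have hU : IsOpen (M ×ˢ J) := hMo.prod hJo
  -- continuity of curried maps
  have key : ∀ f : ℝ × ℝ → F, ContinuousOn f (M ×ˢ J) →
      ∃ B : ℝ → C(Icc y0 y1, F), ContinuousOn B M ∧ ∀ x ∈ M, ∀ y, B x y = f (x, y) := by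
    intro f hf
    have hc : Continuous (fun p : M × Icc y0 y1 => f (p.1, p.2)) := by
      apply hf.comp_continuous (by fun_prop)
      intro p
      exact ⟨p.1.2, hJ p.2.2⟩
    let g : C(M × Icc y0 y1, F) := ⟨_, hc⟩
    refine ⟨fun x => if h : x ∈ M then g.curry ⟨x, h⟩ else 0, ?_, ?_⟩
    · rw [continuousOn_iff_continuous_domRestrict]
      convert g.curry.continuous using 1
      ext x y
      simp
    · intro x hx y
      simp [hx, g]
  obtain ⟨B0, hB0c, hB0⟩ := key A hA.continuousOn
  have hdc : ContinuousOn (fun p => fderiv ℝ A p (1, 0)) (M ×ˢ J) :=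
    (hA.continuousOn_fderiv_of_isOpen hU le_rfl).clm_apply continuousOn_const
  obtain ⟨B1, hB1c, hB1⟩ := key _ hdc
  have hd : ∀ x ∈ M, HasDerivAt B0 (B1 x) x := by
    intro x hx
    have hsub : ∀ t ∈ M, uIcc a t ⊆ M := fun t ht => hMc.uIcc_subset ha ht
    have hint : ∀ t ∈ M, IntervalIntegrable B1 volume a t := fun t ht =>
      (hB1c.mono (hsub t ht)).intervalIntegrable
    have h1 : HasDerivAt (fun t => B0 a + ∫ s in a..t, B1 s) (B1 x) x := by
      apply HasDerivAt.const_add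
      exact intervalIntegral.integral_hasDerivAt_right (hint x hx)
        (hB1c.stronglyMeasurableAtFilter hMo x hx) (hB1c.continuousAt (hMo.mem_nhds hx))
    apply h1.congr_of_eventuallyEq
    filter_upwards [hMo.mem_nhds hx] with t ht
    ext y
    have h2 : (∫ s in a..t, B1 s) y = ∫ s in a..t, B1 s y :=
      ((ContinuousMap.evalCLM ℝ y).intervalIntegral_comp_comm (hint t ht)).symm
    have h3 : ∫ s in a..t, B1 s y = A (t, y) - A (a, y) := by
      apply intervalIntegral.integral_eq_sub_of_hasDerivAt (f := fun s => A (s, y))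
      · intro s hs
        rw [hB1 s (hsub t ht hs)]
        have h4 : HasFDerivAt A (fderiv ℝ A (s, y)) (s, (y:ℝ)) :=
          ((hA.differentiableOn one_ne_zero).differentiableAt
            (hU.mem_nhds ⟨hsub t ht hs, hJ y.2⟩)).hasFDerivAt
        exact h4.comp_hasDerivAt s ((hasDerivAt_id s).prodMk (hasDerivAt_const s (y:ℝ)))
      · exact ((ContinuousMap.evalCLM ℝ y).continuous.comp_continuousOn
          (hB1c.mono (hsub t ht))).intervalIntegrable
    rw [ContinuousMap.add_apply, h2, h3, hB0 t ht, hB0 a ha]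
    abel
  refine ⟨B0, ?_, hB0⟩
  rw [show (1 : WithTop ℕ∞) = 0 + 1 from rfl, contDiffOn_succ_iff_deriv_of_isOpen hMo]
  refine ⟨fun x hx => (hd x hx).differentiableAt.differentiableWithinAt, by simp, ?_⟩
  rw [contDiffOn_zero]
  exact hB1c.congr fun x hx => (hd x hx).deriv

theorem isUnit_aux {X : Type*} [NormedAddCommGroup X] [NormedSpace ℝ X] [CompleteSpace X]
    {T : X →L[ℝ] X} {n : ℕ} (hn : ‖T ^ n‖ < 1) : IsUnit (1 - T) := by
  have hu : IsUnit (1 - T ^ n) := isUnit_one_sub_of_norm_lt_one hn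
  rw [← mul_neg_geom_sum T n] at hu
  refine ((Commute.isUnit_mul_iff ?_).1 hu).1
  show _ * _ = _ * _
  rw [mul_neg_geom_sum, geom_sum_mul_neg]

theorem contDiff_aux {X : Type*} [NormedAddCommGroup X] [NormedSpace ℝ X] [CompleteSpace X]
    {T : X →L[ℝ] X} (hT : IsUnit T) :
    ContDiffAt ℝ 1 (fun S : X →L[ℝ] X => Ring.inverse S) T := by
  obtain ⟨u, rfl⟩ := hT
  exact contDiffAt_ringInverse ℝ u

theorem solve_aux {X Y : Type*} [NormedAddCommGroup X] [NormedSpace ℝ X] [CompleteSpace X]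
    [NormedAddCommGroup Y] [NormedSpace ℝ Y] (W0 : Y → X → X)
    (h1 : ∀ A A' g, W0 (A + A') g = W0 A g + W0 A' g) (h2 : ∀ (c : ℝ) A g, W0 (c • A) g = c • W0 A g)
    (h3 : ∀ A g g', W0 A (g + g') = W0 A g + W0 A g') (h4 : ∀ (c : ℝ) A g, W0 A (c • g) = c • W0 A g)
    (C : ℝ) (hC : ∀ A g, ‖W0 A g‖ ≤ C * ‖A‖ * ‖g‖)
    (hW : ∀ A, ∃ (n : ℕ) (c : ℝ), 0 ≤ c ∧ c < 1 ∧ ∀ g, ‖(W0 A)^[n] g‖ ≤ c * ‖g‖)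
    {A : ℝ → Y} {M : Set ℝ} (hA : ContDiffOn ℝ 1 A M) (b : X) :
    ∃ S : ℝ → X, ContDiffOn ℝ 1 S M ∧ ∀ x, S x = b + W0 (A x) (S x) := by
  let W : Y →L[ℝ] X →L[ℝ] X := LinearMap.mkContinuous₂ (LinearMap.mk₂ ℝ W0 h1 h2 h3 h4) C hC
  have hT : ∀ A, IsUnit (1 - W A) := by
    intro A
    obtain ⟨n, c, h0, h1, hc⟩ := hW A
    refine isUnit_aux (n := n) (lt_of_le_of_lt (ContinuousLinearMap.opNorm_le_bound _ h0 fun g => ?_) h1)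
    rw [FunLike.coe_pow_eq_iterate]
    exact hc g
  refine ⟨fun x => Ring.inverse (1 - W (A x)) b, fun x hx => ?_, fun x => ?_⟩
  · have h2 : ContDiffWithinAt ℝ 1 (fun x => 1 - W (A x)) M x :=
      contDiffWithinAt_const.sub (W.contDiff.contDiffAt.comp_contDiffWithinAt x (hA x hx))
    exact ((contDiff_aux (hT _)).comp_contDiffWithinAt x h2).clm_apply contDiffWithinAt_const
  · have h1 : ((1 - W (A x)) * Ring.inverse (1 - W (A x))) b = b := by
      rw [Ring.mul_inverse_cancel _ (hT _)]
      rfl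
    have h2 : Ring.inverse (1 - W (A x)) b - W (A x) (Ring.inverse (1 - W (A x)) b) = b := h1
    exact sub_eq_iff_eq_add.1 h2

theorem volterra_unit {E : Type*} [NormedAddCommGroup E] [NormedSpace ℝ E] [CompleteSpace E]
    {y0 y1 : ℝ} (h : y0 ≤ y1) (W : C(Icc y0 y1, E →L[ℝ] E) → C(Icc y0 y1, E) → C(Icc y0 y1, E))
    (hW : ∀ A g y, W A g y = ∫ s in y0..y, IccExtend h A s (IccExtend h g s)) (A : C(Icc y0 y1, E →L[ℝ] E)) :
    ∃ (n : ℕ) (c : ℝ), 0 ≤ c ∧ c < 1 ∧ ∀ g, ‖(W A)^[n] g‖ ≤ c * ‖g‖ := by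
  have hb : ∀ n : ℕ, ∀ g : C(Icc y0 y1, E), ∀ y : Icc y0 y1, ‖((W A)^[n] g) y‖ ≤ (‖A‖ ^ n * ‖g‖ / n.factorial) * (y - y0) ^ n := by
    intro n g
    induction n with
    | zero => intro y; simpa using g.norm_coe_le_norm y
    | succ n ih =>
      intro y
      rw [Function.iterate_succ_apply', hW]
      have := intervalIntegral.norm_integral_le_of_norm_le (a := y0) (b := y) (μ := volume)
        (f := fun s => IccExtend h A s (IccExtend h ((W A)^[n] g) s))
        (g := fun s => ‖A‖ * ((‖A‖ ^ n * ‖g‖ / n.factorial) * (s - y0) ^ n)) y.2.1 (by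
          refine Filter.Eventually.of_forall fun s hs => ?_
          have hs' : s ∈ Icc y0 y1 := ⟨hs.1.le, hs.2.trans y.2.2⟩
          rw [IccExtend_of_mem h _ hs', IccExtend_of_mem h _ hs']
          refine (ContinuousLinearMap.le_opNorm _ _).trans ?_
          exact mul_le_mul (A.norm_coe_le_norm _) (ih _) (by positivity) (by positivity)) (by
          apply Continuous.intervalIntegrable; fun_prop)
      refine this.trans (le_of_eq ?_)
      rw [intervalIntegral.integral_const_mul, intervalIntegral.integral_const_mul,
        intervalIntegral.integral_comp_sub_right (fun s => s ^ n), integral_pow, Nat.factorial_succ]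
      push_cast
      field_simp
      simp
      ring
  have ht : Filter.Tendsto (fun n : ℕ => (‖A‖ * (y1 - y0)) ^ n / n.factorial) Filter.atTop (nhds 0) :=
    FloorSemiring.tendsto_pow_div_factorial_atTop _
  obtain ⟨n, hn⟩ := (ht.eventually (gt_mem_nhds one_pos)).exists
  have h0 : 0 ≤ y1 - y0 := sub_nonneg.2 h
  refine ⟨n, _, by positivity, hn, fun g => ?_⟩
  · rw [ContinuousMap.norm_le _ (by positivity)]
    intro y
    refine (hb n g y).trans ?_
    have h1 : (y:ℝ) ≤ y1 := y.2.2
    have h2 : 0 ≤ (y:ℝ) - y0 := sub_nonneg.2 y.2.1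
    calc _ ≤ (‖A‖ ^ n * ‖g‖ / n.factorial) * (y1 - y0) ^ n := by gcongr
      _ = _ := by rw [mul_pow]; ring

theorem linODE0 {E : Type*} [NormedAddCommGroup E] [NormedSpace ℝ E] [CompleteSpace E]
    {M : Set ℝ} {y0 y1 : ℝ} (h : y0 ≤ y1) {As : ℝ → C(Icc y0 y1, E →L[ℝ] E)}
    (hAs : ContDiffOn ℝ 1 As M) (b : E) :
    ∃ S : ℝ → C(Icc y0 y1, E), ContDiffOn ℝ 1 S M ∧ 
      ∀ x y, S x y = b + ∫ s in y0..y, IccExtend h (As x) s (IccExtend h (S x) s) := by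
  have hc : ∀ (A : C(Icc y0 y1, E →L[ℝ] E)) (g : C(Icc y0 y1, E)),
      Continuous fun s => IccExtend h A s (IccExtend h g s) := fun A g =>
    (A.continuous.Icc_extend').clm_apply (g.continuous.Icc_extend')
  let W : C(Icc y0 y1, E →L[ℝ] E) → C(Icc y0 y1, E) → C(Icc y0 y1, E) := fun A g =>
    ⟨fun y : Icc y0 y1 => ∫ s in y0..y, IccExtend h A s (IccExtend h g s), 
      (intervalIntegral.continuous_primitive (fun a b => (hc A g).intervalIntegrable a b) y0).comp
        continuous_subtype_val⟩
  have hW : ∀ A g y, W A g y = ∫ s in y0..y, IccExtend h A s (IccExtend h g s) := fun A g y => rfl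
  clear_value W
  have hex : ∃ S : ℝ → C(Icc y0 y1, E), ContDiffOn ℝ 1 S M ∧
      ∀ x, S x = ContinuousMap.const _ b + W (As x) (S x) := by
    refine solve_aux W ?_ ?_ ?_ ?_ (y1 - y0) ?_ (volterra_unit h W hW) hAs (ContinuousMap.const _ b)
    · intro A A' g
      ext y
      simp only [hW, ContinuousMap.add_apply]
      rw [← intervalIntegral.integral_add ((hc _ _).intervalIntegrable _ _) ((hc _ _).intervalIntegrable _ _)]
      rfl
    · intro c A g
      ext y
      simp only [hW, ContinuousMap.smul_apply]
      rw [← intervalIntegral.integral_smul]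
      rfl
    · intro A g g'
      ext y
      simp only [hW, ContinuousMap.add_apply]
      rw [← intervalIntegral.integral_add ((hc _ _).intervalIntegrable _ _) ((hc _ _).intervalIntegrable _ _)]
      simp [IccExtend]
    · intro c A g
      ext y
      simp only [hW, ContinuousMap.smul_apply]
      rw [← intervalIntegral.integral_smul]
      simp [IccExtend]
    · intro A g
      have h0 : 0 ≤ y1 - y0 := sub_nonneg.2 h
      rw [ContinuousMap.norm_le _ (by positivity)]
      intro y
      rw [hW]
      have := intervalIntegral.norm_integral_le_of_norm_le_const (a := y0) (b := y) (C := ‖A‖ * ‖g‖)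
        (f := fun s => IccExtend h A s (IccExtend h g s)) (by
          intro s _
          refine (ContinuousLinearMap.le_opNorm _ _).trans ?_
          exact mul_le_mul (A.norm_coe_le_norm _) (g.norm_coe_le_norm _) (by positivity) (by positivity))
      refine this.trans ?_
      rw [abs_of_nonneg (sub_nonneg.2 y.2.1)]
      have : (y:ℝ) ≤ y1 := y.2.2
      calc _ ≤ ‖A‖ * ‖g‖ * (y1 - y0) := by gcongr
        _ = _ := by ring
  obtain ⟨S, hS, hSe'⟩ := hex
  refine ⟨S, hS, fun x y => ?_⟩
  rw [← hW]
  exact congrArg (fun g : C(Icc y0 y1, E) => g y) (hSe' x)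

theorem linODE {E : Type*} [NormedAddCommGroup E] [NormedSpace ℝ E] [CompleteSpace E]
    {M J : Set ℝ} (hMo : IsOpen M) (hMc : M.OrdConnected) (hJo : IsOpen J) {a : ℝ} (ha : a ∈ M)
    {y0 y1 : ℝ} (h : y0 ≤ y1) (hJ : Icc y0 y1 ⊆ J) {A : ℝ × ℝ → E →L[ℝ] E}
    (hA : ContDiffOn ℝ 1 A (M ×ˢ J)) (b : E) :
    ∃ B B' : ℝ → ℝ → E, ContinuousOn (fun p : ℝ × ℝ => B p.1 p.2) (M ×ˢ univ) ∧
      ContinuousOn (fun p : ℝ × ℝ => B' p.1 p.2) (M ×ˢ univ) ∧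
      (∀ x ∈ M, ∀ y, HasDerivAt (fun x => B x y) (B' x y) x) ∧
      (∀ x ∈ M, ∀ y ∈ Icc y0 y1, HasDerivWithinAt (B x) (A (x, y) (B x y)) (Icc y0 y1) y) ∧
      ∀ x ∈ M, B x y0 = b := by
  obtain ⟨As, hAs, hAs'⟩ := curry_contDiff hMo hMc hJo ha hJ hA
  obtain ⟨S, hS, hSe⟩ := linODE0 h hAs b
  have hSd : ∀ x ∈ M, HasDerivAt S (deriv S x) x := fun x hx =>
    ((hS.differentiableOn one_ne_zero).differentiableAt (hMo.mem_nhds hx)).hasDerivAt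
  have hcont : ∀ T : ℝ → C(Icc y0 y1, E), ContinuousOn T M →
      ContinuousOn (fun p : ℝ × ℝ => IccExtend h (T p.1) p.2) (M ×ˢ univ) := by
    intro T hT
    have h1 : ContinuousOn (fun p : ℝ × ℝ => (T p.1, projIcc y0 y1 h p.2)) (M ×ˢ univ) :=
      (hT.comp continuousOn_fst fun p hp => hp.1).prodMk (continuous_projIcc.comp continuous_snd).continuousOn
    exact continuous_eval.comp_continuousOn h1
  refine ⟨fun x => IccExtend h (S x), fun x => IccExtend h (⇑(deriv S x : C(Icc y0 y1, E))), hcont _ hS.continuousOn, hcont _ (hS.continuousOn_deriv_of_isOpen hMo le_rfl), ?_, ?_, ?_⟩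
  · intro x hx y
    exact (ContinuousMap.evalCLM ℝ (projIcc y0 y1 h y)).hasFDerivAt.comp_hasDerivAt x (hSd x hx)
  · intro x hx y hy
    have hc : Continuous fun s => IccExtend h (As x) s (IccExtend h (S x) s) :=
      ((As x).continuous.Icc_extend').clm_apply ((S x).continuous.Icc_extend')
    have h1 := ((hc.integral_hasStrictDerivAt y0 y).hasDerivAt.const_add b).hasDerivWithinAt (s := Icc y0 y1)
    have h2 : A (x, y) = IccExtend h (As x) y := by
      rw [IccExtend_of_mem h _ hy, hAs' x hx]
    rw [h2]
    refine h1.congr (fun t ht => ?_) ?_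
    · show IccExtend h (S x) t = _
      rw [IccExtend_of_mem h _ ht, hSe]
    · show IccExtend h (S x) y = _
      rw [IccExtend_of_mem h _ hy, hSe]
  · intro x hx
    simp only [IccExtend_left, hSe]
    simp

theorem contDiff_flip {V : Type*} [NormedAddCommGroup V] [NormedSpace ℝ V] {U : Set (ℝ × ℝ)}
    {c : ℝ × ℝ → V →L[ℝ] V} (hc : ContDiffOn ℝ 1 c U) :
    ContDiffOn ℝ 1 (fun p => (ContinuousLinearMap.compL ℝ V V V).flip (c p)) U :=
  contDiffOn_const.clm_apply hc

theorem contDiff_noflip {V : Type*} [NormedAddCommGroup V] [NormedSpace ℝ V] {U : Set (ℝ × ℝ)}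
    {c : ℝ × ℝ → V →L[ℝ] V} (hc : ContDiffOn ℝ 1 c U) :
    ContDiffOn ℝ 1 (fun p => -(ContinuousLinearMap.compL ℝ V V V) (c p)) U :=
  (contDiffOn_const.clm_apply hc).neg

open Filter Topology in
theorem fbar_off {M J : Set ℝ} (hMo : IsOpen M) {a : ℝ} {f : ℝ → ℝ}
    (hf : ContinuousOn f (M ∩ Set.Ioi a)) {K : Set ℝ} (hK : IsCompact K)
    (hfK : f '' (M ∩ Set.Ioi a) ⊆ K) {x y : ℝ} (hx : x ∈ M)
    (h : x < a ∨ y ∉ K ∨ (a < x ∧ y ≠ f x)) :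
    (x, y) ∉ closure {p : ℝ × ℝ | ∃ x ∈ M ∩ Set.Ioi a, p = (x, f x)} ∩ (M ×ˢ J) := by
  rintro ⟨hc, -⟩
  rcases h with h | h | ⟨h1, h2⟩
  · have hcl : IsClosed {p : ℝ × ℝ | a ≤ p.1} := isClosed_le continuous_const continuous_fst
    have : (x, y) ∈ {p : ℝ × ℝ | a ≤ p.1} := by
      refine closure_minimal ?_ hcl hc
      rintro _ ⟨t, ht, rfl⟩
      exact le_of_lt (show a < t from ht.2)
    exact absurd h (not_lt.2 this)
  · have hcl : IsClosed {p : ℝ × ℝ | p.2 ∈ K} := hK.isClosed.preimage continuous_snd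
    refine h (closure_minimal (t := {p : ℝ × ℝ | p.2 ∈ K}) ?_ hcl hc)
    rintro _ ⟨t, ht, rfl⟩
    exact hfK ⟨t, ht, rfl⟩
  · rw [mem_closure_iff_frequently] at hc
    apply hc
    have hfx : ContinuousAt f x := hf.continuousAt ((hMo.inter isOpen_Ioi).mem_nhds ⟨hx, h1⟩)
    have h3 : Tendsto (fun p : ℝ × ℝ => p.2 - f p.1) (𝓝 (x, y)) (𝓝 (y - f x)) :=
      (continuousAt_snd).sub (ContinuousAt.comp (f := Prod.fst) (x := (x, y)) hfx continuousAt_fst)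
    filter_upwards [h3.eventually_ne (sub_ne_zero.2 h2)] with p hp
    rintro ⟨t, ht, rfl⟩
    simp at hp

theorem stmt19 (M J : Set ℝ) (hMo : IsOpen M) (hMc : M.OrdConnected)
    (hJo : IsOpen J) (hJc : J.OrdConnected)
    (a : ℝ) (haM : a ∈ M)
    (f : ℝ → ℝ) (hf : ContinuousOn f (M ∩ Set.Ioi a))
    (hcpt : ∃ K : Set ℝ, IsCompact K ∧ K ⊆ J ∧ f '' (M ∩ Set.Ioi a) ⊆ K)
    (r : ℕ)
    (ω : ℝ × ℝ → (ℝ × ℝ) →L[ℝ] ((Fin r → ℝ) →L[ℝ] (Fin r → ℝ)))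
    (hω : ContDiffOn ℝ 1 ω (M ×ˢ J))
    (Fbar : Set (ℝ × ℝ))
    (hFbar : Fbar =
      closure {p : ℝ × ℝ | ∃ x ∈ M ∩ Set.Ioi a, p = (x, f x)} ∩ (M ×ˢ J))
    (σ : ℝ × ℝ → Fin r → ℝ)
    (hσ : ∀ p ∈ (M ×ˢ J) \ Fbar, HasFDerivAt σ (-(ω p).flip (σ p)) p) :
    ∃ τ : ℝ × ℝ → Fin r → ℝ,
      (∀ p ∈ M ×ˢ J, HasFDerivAt τ (-(ω p).flip (τ p)) p) ∧
      ∀ p ∈ (M ×ˢ J) \ Fbar, τ p = σ p := by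
  classical
  obtain ⟨K, hK, hKJ, hfK⟩ := hcpt
  have hU : IsOpen (M ×ˢ J) := hMo.prod hJo
  -- a point of `M` to the right of `a`
  obtain ⟨a1, ha1M, ha1⟩ : ∃ t ∈ M, a < t := by
    obtain ⟨t, ht, hs⟩ := mem_nhdsGE_iff_exists_Icc_subset.1
      (mem_nhdsWithin_of_mem_nhds (t := Ici a) (hMo.mem_nhds haM))
    exact ⟨t, hs ⟨le_of_lt ht, le_rfl⟩, ht⟩
  have hKne : K.Nonempty := ⟨f a1, hfK ⟨a1, ⟨ha1M, ha1⟩, rfl⟩⟩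
  obtain ⟨m0, hm0, hm0'⟩ := hK.exists_isLeast hKne
  obtain ⟨m1, hm1, hm1'⟩ := hK.exists_isGreatest hKne
  obtain ⟨y1, hy1J, hy1⟩ : ∃ t ∈ J, m1 < t := by
    obtain ⟨t, ht, hs⟩ := mem_nhdsGE_iff_exists_Icc_subset.1
      (mem_nhdsWithin_of_mem_nhds (t := Ici m1) (hJo.mem_nhds (hKJ hm1)))
    exact ⟨t, hs ⟨le_of_lt ht, le_rfl⟩, ht⟩
  obtain ⟨y0, hy0J, hy0⟩ : ∃ t ∈ J, t < m0 := by
    obtain ⟨t, ht, hs⟩ := mem_nhdsLE_iff_exists_Icc_subset.1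
      (mem_nhdsWithin_of_mem_nhds (t := Iic m0) (hJo.mem_nhds (hKJ hm0)))
    exact ⟨t, hs ⟨le_rfl, le_of_lt ht⟩, ht⟩
  have hKI : ∀ y ∈ K, y0 < y ∧ y < y1 := fun y hy =>
    ⟨hy0.trans_le (hm0' hy), (hm1' hy).trans_lt hy1⟩
  have hy01 : y0 < y1 := (hKI m0 hm0).1.trans (hKI m0 hm0).2
  have hIJ : Icc y0 y1 ⊆ J := hJc.out hy0J hy1J
  have hfI : ∀ x ∈ M, a < x → y0 < f x ∧ f x < y1 := fun x hx hxa =>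
    hKI _ (hfK ⟨x, ⟨hx, hxa⟩, rfl⟩)
  have hL : y0 ∈ Icc y0 y1 := ⟨le_rfl, hy01.le⟩
  have hR : y1 ∈ Icc y0 y1 := ⟨hy01.le, le_rfl⟩
  -- points off Fbar
  have off : ∀ {x y}, x ∈ M → y ∈ J → (x < a ∨ y ∉ K ∨ (a < x ∧ y ≠ f x)) →
      (x, y) ∈ (M ×ˢ J) \ Fbar := by
    intro x y hx hy h
    exact ⟨⟨hx, hy⟩, by rw [hFbar]; exact fbar_off hMo hf hK hfK hx h⟩
  have hy0K : y0 ∉ K := fun h => lt_irrefl _ (hKI _ h).1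
  have hy1K : y1 ∉ K := fun h => lt_irrefl _ (hKI _ h).2
  -- gauge
  have hω2 : ContDiffOn ℝ 1 (fun p => ω p (0, 1)) (M ×ˢ J) := hω.clm_apply contDiffOn_const
  have hω1 : ContinuousOn (fun p => ω p (1, 0)) (M ×ˢ J) :=
    hω.continuousOn.clm_apply continuousOn_const
  let L := ContinuousLinearMap.compL ℝ (Fin r → ℝ) (Fin r → ℝ) (Fin r → ℝ)
  obtain ⟨H, H', hHc, hHc', hHx, hHy, hH0⟩ := linODE hMo hMc hJo haM hy01.le hIJ
    (A := fun p => L.flip (ω p (0, 1))) (contDiff_flip hω2)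
    (ContinuousLinearMap.id ℝ (Fin r → ℝ))
  obtain ⟨G, G', hGc, hGc', hGx, hGy, hG0⟩ := linODE hMo hMc hJo haM hy01.le hIJ
    (A := fun p => -L (ω p (0, 1))) (contDiff_noflip hω2)
    (ContinuousLinearMap.id ℝ (Fin r → ℝ))
  have hHG : ∀ x ∈ M, ∀ y ∈ Icc y0 y1, (H x y).comp (G x y) = ContinuousLinearMap.id ℝ _ := by
    intro x hx y hy
    have hd : ∀ s ∈ Icc y0 y1,
        HasDerivWithinAt (fun s => (H x s).comp (G x s)) 0 (Icc y0 y1) s := by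
      intro s hs
      convert (hHy x hx s hs).clm_comp (hGy x hx s hs) using 1
      ext v i
      simp [L]
    have := (convex_Icc y0 y1).norm_image_sub_le_of_norm_hasDerivWithin_le (C := 0) hd
      (by simp) hL hy
    rw [zero_mul, norm_le_zero_iff, sub_eq_zero] at this
    rw [this, hH0 x hx, hG0 x hx]
    rfl
  have hGH : ∀ x ∈ M, ∀ y ∈ Icc y0 y1, ∀ v, G x y (H x y v) = v := by
    intro x hx y hy v
    have h1 : ((H x y : (Fin r → ℝ) →ₗ[ℝ] (Fin r → ℝ)) * (G x y : (Fin r → ℝ) →ₗ[ℝ] (Fin r → ℝ))) = 1 := by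
      refine LinearMap.ext fun v => ?_
      exact congrArg (fun g : (Fin r → ℝ) →L[ℝ] (Fin r → ℝ) => g v) (hHG x hx y hy)
    rw [mul_eq_one_comm] at h1
    exact congrArg (fun g : (Fin r → ℝ) →ₗ[ℝ] (Fin r → ℝ) => g v) h1
  have hHG' : ∀ x ∈ M, ∀ y ∈ Icc y0 y1, ∀ v, H x y (G x y v) = v := fun x hx y hy v =>
    congrArg (fun g => g v) (hHG x hx y hy)
  let w : ℝ → ℝ → (Fin r → ℝ) := fun x y => H x y (σ (x, y))
  let η : ℝ → ℝ → ((Fin r → ℝ) →L[ℝ] (Fin r → ℝ)) := fun x y =>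
    (H' x y - (H x y).comp (ω (x, y) (1, 0))).comp (G x y)
  have hηc : ContinuousOn (fun p : ℝ × ℝ => η p.1 p.2) (M ×ˢ J) := by
    have hs : M ×ˢ J ⊆ M ×ˢ univ := prod_mono_right (subset_univ _)
    exact ((hHc'.mono hs).sub ((hHc.mono hs).clm_comp hω1)).clm_comp (hGc.mono hs)
  -- vertical constancy
  have hwconst : ∀ x ∈ M, ∀ c ∈ Icc y0 y1, ∀ y ∈ Icc y0 y1,
      (∀ s ∈ uIcc c y, (x, s) ∈ (M ×ˢ J) \ Fbar) → w x y = w x c := by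
    intro x hx c hc y hy hs
    have hsub : uIcc c y ⊆ Icc y0 y1 := ordConnected_Icc.uIcc_subset hc hy
    have hd : ∀ s ∈ uIcc c y, HasDerivWithinAt (w x) 0 (uIcc c y) s := by
      intro s hss
      have h1 := ((hHy x hx s (hsub hss)).mono hsub)
      have h2 := (((hσ _ (hs s hss)).comp_hasDerivAt s
        ((hasDerivAt_const s x).prodMk (hasDerivAt_id s))).hasDerivWithinAt (s := uIcc c y))
      refine (h1.clm_apply h2).congr_deriv ?_
      simp [L]
    have := (convex_uIcc c y).norm_image_sub_le_of_norm_hasDerivWithin_le (C := 0) hd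
      (by simp) left_mem_uIcc right_mem_uIcc
    rwa [zero_mul, norm_le_zero_iff, sub_eq_zero] at this
  have hwx : ∀ x ∈ M, ∀ y ∈ Icc y0 y1, (x, y) ∈ (M ×ˢ J) \ Fbar →
      HasDerivAt (fun x => w x y) (η x y (w x y)) x := by
    intro x hx y hy hp
    have h1 := hHx x hx y
    have h2 := (hσ _ hp).comp_hasDerivAt x ((hasDerivAt_id x).prodMk (hasDerivAt_const x y))
    refine (h1.clm_apply h2).congr_deriv ?_
    simp [w, η, hGH x hx y hy, sub_eq_add_neg]
  have hstep : ∀ x ∈ M, ∀ c ∈ Icc y0 y1, ∀ y ∈ Icc y0 y1,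
      (∀ᶠ x' in nhds x, ∀ s ∈ uIcc c y, (x', s) ∈ (M ×ˢ J) \ Fbar) →
      w x y = w x c ∧ η x y (w x c) = η x c (w x c) := by
    intro x hx c hc y hy hev
    have h0 := hev.self_of_nhds
    have h1 := hwconst x hx c hc y hy h0
    refine ⟨h1, ?_⟩
    have hy' := hwx x hx y hy (h0 y right_mem_uIcc)
    have hc' := hwx x hx c hc (h0 c left_mem_uIcc)
    rw [h1] at hy'
    refine hy'.unique (hc'.congr_of_eventuallyEq ?_)
    filter_upwards [hev, hMo.mem_nhds hx] with x' hx' hxM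
    exact hwconst x' hxM c hc y hy hx'
  have hleft : ∀ x ∈ M, x < a → ∀ y ∈ Icc y0 y1,
      w x y = w x y0 ∧ η x y (w x y0) = η x y0 (w x y0) := by
    intro x hx hxa y hy
    refine hstep x hx y0 hL y hy ?_
    filter_upwards [hMo.mem_nhds hx, Iio_mem_nhds hxa] with x' h1 h2 s hs
    exact off h1 (hIJ (ordConnected_Icc.uIcc_subset hL hy hs)) (Or.inl h2)
  have hfc : ∀ x ∈ M, a < x → ContinuousAt f x := fun x hx hxa =>
    hf.continuousAt ((hMo.inter isOpen_Ioi).mem_nhds ⟨hx, hxa⟩)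
  have hlow : ∀ x ∈ M, a < x → ∀ y ∈ Icc y0 y1, y < f x →
      w x y = w x y0 ∧ η x y (w x y0) = η x y0 (w x y0) := by
    intro x hx hxa y hy hyf
    refine hstep x hx y0 hL y hy ?_
    filter_upwards [hMo.mem_nhds hx, Ioi_mem_nhds hxa,
      (hfc x hx hxa).eventually (lt_mem_nhds hyf)] with x' h1 h2 h3 s hs
    refine off h1 (hIJ (ordConnected_Icc.uIcc_subset hL hy hs)) (Or.inr (Or.inr ⟨h2, ?_⟩))
    rw [uIcc_of_le hy.1] at hs
    exact (hs.2.trans_lt h3).ne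
  have hup : ∀ x ∈ M, a < x → ∀ y ∈ Icc y0 y1, f x < y →
      w x y = w x y1 ∧ η x y (w x y1) = η x y1 (w x y1) := by
    intro x hx hxa y hy hyf
    refine hstep x hx y1 hR y hy ?_
    filter_upwards [hMo.mem_nhds hx, Ioi_mem_nhds hxa,
      (hfc x hx hxa).eventually (gt_mem_nhds hyf)] with x' h1 h2 h3 s hs
    refine off h1 (hIJ (ordConnected_Icc.uIcc_subset hR hy hs)) (Or.inr (Or.inr ⟨h2, ?_⟩))
    rw [uIcc_of_ge hy.2] at hs
    exact (h3.trans_le hs.1).ne'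
  -- continuity of η in y
  have hηy : ∀ x ∈ M, ∀ y ∈ J, ∀ v, ContinuousAt (fun s => η x s v) y := by
    intro x hx y hy v
    have h1 : ContinuousAt (fun p : ℝ × ℝ => η p.1 p.2) (x, y) :=
      hηc.continuousAt (hU.mem_nhds ⟨hx, hy⟩)
    have h2 : ContinuousAt (fun s => η x s) y :=
      ContinuousAt.comp (f := fun s : ℝ => (x, s)) h1 (by fun_prop)
    exact h2.clm_apply continuousAt_const
  have hηx : ∀ x ∈ M, ∀ y ∈ J, ContinuousAt (fun s => η s y) x := by
    intro x hx y hy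
    have h1 : ContinuousAt (fun p : ℝ × ℝ => η p.1 p.2) (x, y) :=
      hηc.continuousAt (hU.mem_nhds ⟨hx, hy⟩)
    exact ContinuousAt.comp (f := fun s : ℝ => (s, y)) h1 (by fun_prop)
  have hgl : ∀ x ∈ M, a < x → η x (f x) (w x y0) = η x y0 (w x y0) := by
    intro x hx hxa
    have h1 := hfI x hx hxa
    have h2 := (hηy x hx (f x) (hIJ ⟨h1.1.le, h1.2.le⟩) (w x y0)).tendsto.mono_left
      (nhdsWithin_le_nhds (s := Iio (f x)))
    refine tendsto_nhds_unique h2 (tendsto_const_nhds.congr' ?_)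
    filter_upwards [self_mem_nhdsWithin, mem_nhdsWithin_of_mem_nhds (Ioi_mem_nhds h1.1)] with s hs hs'
    exact (hlow x hx hxa s ⟨le_of_lt hs', (le_of_lt hs).trans h1.2.le⟩ hs).2.symm
  have hgu : ∀ x ∈ M, a < x → η x (f x) (w x y1) = η x y1 (w x y1) := by
    intro x hx hxa
    have h1 := hfI x hx hxa
    have h2 := (hηy x hx (f x) (hIJ ⟨h1.1.le, h1.2.le⟩) (w x y1)).tendsto.mono_left
      (nhdsWithin_le_nhds (s := Ioi (f x)))
    refine tendsto_nhds_unique h2 (tendsto_const_nhds.congr' ?_)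
    filter_upwards [self_mem_nhdsWithin, mem_nhdsWithin_of_mem_nhds (Iio_mem_nhds h1.2)] with s hs hs'
    exact (hup x hx hxa s ⟨h1.1.le.trans (le_of_lt hs), le_of_lt hs'⟩ hs).2.symm
  -- derivatives of the bottom and the top value
  have hv : ∀ x ∈ M, HasDerivAt (fun x => w x y0) (η x y0 (w x y0)) x := fun x hx =>
    hwx x hx y0 hL (off hx hy0J (Or.inr (Or.inl hy0K)))
  have hu : ∀ x ∈ M, HasDerivAt (fun x => w x y1) (η x y1 (w x y1)) x := fun x hx =>
    hwx x hx y1 hR (off hx hy1J (Or.inr (Or.inl hy1K)))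
  -- closure at `a`
  have hnea : ∀ᶠ x in nhdsWithin a (Iio a), x ∈ M ∧ x < a :=
    (Filter.Eventually.and (mem_nhdsWithin_of_mem_nhds (hMo.mem_nhds haM)) self_mem_nhdsWithin)
  have hwa : ∀ y ∈ Icc y0 y1, ContinuousAt (fun x => w x y) a → w a y = w a y0 := by
    intro y hy hc
    refine tendsto_nhds_unique (hc.tendsto.mono_left (nhdsWithin_le_nhds (s := Iio a)))
      (((hv a haM).continuousAt.tendsto.mono_left (nhdsWithin_le_nhds (s := Iio a))).congr' ?_)
    filter_upwards [hnea] with x hx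
    exact (hleft x hx.1 hx.2 y hy).1.symm
  have hηa : ∀ y ∈ Icc y0 y1, η a y (w a y0) = η a y0 (w a y0) := by
    intro y hy
    have hc := (hv a haM).continuousAt
    refine tendsto_nhds_unique
      ((((hηx a haM y (hIJ hy)).clm_apply hc).tendsto).mono_left (nhdsWithin_le_nhds (s := Iio a)))
      (((((hηx a haM y0 hy0J).clm_apply hc).tendsto).mono_left
        (nhdsWithin_le_nhds (s := Iio a))).congr' ?_)
    filter_upwards [hnea] with x hx
    exact (hleft x hx.1 hx.2 y hy).2.symm
  have hwa1 : w a y1 = w a y0 := hwa y1 hR (hu a haM).continuousAt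
  -- Gronwall
  have huv : ∀ x ∈ M, a ≤ x → w x y1 = w x y0 := by
    intro b hb hab
    have hsub : Icc a b ⊆ M := hMc.out haM hb
    have hcpt : IsCompact (Icc a b ×ˢ Icc y0 y1) := isCompact_Icc.prod isCompact_Icc
    obtain ⟨C, hC⟩ := hcpt.exists_bound_of_continuousOn (hηc.mono (prod_mono hsub hIJ))
    have hd : ∀ x ∈ M, HasDerivAt (fun x => w x y1 - w x y0)
        (η x y1 (w x y1) - η x y0 (w x y0)) x := fun x hx => (hu x hx).sub (hv x hx)
    have := eq_zero_of_abs_deriv_le_mul_abs_self_of_eq_zero_right (K := C) (a := a) (b := b)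
      (fun x hx => (hd x (hsub hx)).continuousAt.continuousWithinAt)
      (fun x hx => (hd x (hsub (Ico_subset_Icc_self hx))).hasDerivWithinAt)
      (by simp [hwa1]) (by
        intro x hx
        have hxM := hsub (Ico_subset_Icc_self hx)
        rcases hx.1.eq_or_lt with h | h
        · rw [← h, hwa1, hηa y1 hR]; simp
        · rw [← hgu x hxM h, ← hgl x hxM h, ← map_sub]
          refine (ContinuousLinearMap.le_opNorm _ _).trans ?_
          have h1 := hfI x hxM h
          have := hC (x, f x) ⟨Ico_subset_Icc_self hx, h1.1.le, h1.2.le⟩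
          gcongr) b ⟨hab, le_rfl⟩
    exact sub_eq_zero.1 this
  -- key identities
  have hηall : ∀ x ∈ M, ∀ y ∈ Icc y0 y1, η x y (w x y0) = η x y0 (w x y0) := by
    intro x hx y hy
    rcases lt_trichotomy x a with h | rfl | h
    · exact (hleft x hx h y hy).2
    · exact hηa y hy
    · rcases lt_trichotomy y (f x) with h1 | rfl | h1
      · exact (hlow x hx h y hy h1).2
      · exact hgl x hx h
      · have h2 := (hup x hx h y hy h1).2
        have h3 := hgu x hx h
        rw [huv x hx h.le] at h2 h3
        rw [h2, ← h3, hgl x hx h]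
  have hwall : ∀ x ∈ M, ∀ y ∈ Icc y0 y1, (x, y) ∈ (M ×ˢ J) \ Fbar → w x y = w x y0 := by
    intro x hx y hy hp
    rcases lt_trichotomy x a with h | rfl | h
    · exact (hleft x hx h y hy).1
    · exact hwa y hy (hwx x hx y hy hp).continuousAt
    · rcases lt_trichotomy y (f x) with h1 | rfl | h1
      · exact (hlow x hx h y hy h1).1
      · exfalso
        apply hp.2
        rw [hFbar]
        exact ⟨subset_closure ⟨x, ⟨hx, h⟩, rfl⟩, hp.1⟩
      · rw [(hup x hx h y hy h1).1, huv x hx h.le]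
  let T : ℝ → ℝ → (Fin r → ℝ) := fun x y => G x y (w x y0)
  have hTσ : ∀ x ∈ M, ∀ y ∈ Icc y0 y1, (x, y) ∈ (M ×ˢ J) \ Fbar → T x y = σ (x, y) := by
    intro x hx y hy hp
    show G x y (w x y0) = _
    rw [← hwall x hx y hy hp]
    exact hGH x hx y hy _
  have hTx : ∀ x ∈ M, ∀ y ∈ Icc y0 y1,
      HasDerivAt (fun x => T x y) (-(ω (x, y) (1, 0) (T x y))) x := by
    intro x hx y hy
    have h1 := (hGx x hx y).clm_apply (hv x hx)
    refine h1.congr_deriv ?_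
    rw [← hηall x hx y hy]
    -- G' + G H' G = 0
    have h2 : (G' x y).comp (H x y) + (G x y).comp (H' x y) = 0 := by
      have h3 := (hGx x hx y).clm_comp (hHx x hx y)
      have h4 : HasDerivAt (fun x => (G x y).comp (H x y)) 0 x := by
        refine (hasDerivAt_const x (ContinuousLinearMap.id ℝ (Fin r → ℝ))).congr_of_eventuallyEq ?_
        filter_upwards [hMo.mem_nhds hx] with x' hx'
        ext1 v
        exact hGH x' hx' y hy v
      exact h3.unique h4
    have h5 := congrArg (fun g => g (G x y (w x y0))) h2
    simp only [add_apply, ContinuousLinearMap.comp_apply, hHG' x hx y hy] at h5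
    simp only [η, T, ContinuousLinearMap.comp_apply, sub_apply, map_sub, hGH x hx y hy]
    rw [← add_sub_assoc, h5]
    simp
  have hTy : ∀ x ∈ M, ∀ y ∈ Ioo y0 y1,
      HasDerivAt (fun y => T x y) (-(ω (x, y) (0, 1) (T x y))) y := by
    intro x hx y hy
    have h1 := ((hGy x hx y (Ioo_subset_Icc_self hy)).hasDerivAt
      (Icc_mem_nhds hy.1 hy.2)).clm_apply (hasDerivAt_const y (w x y0))
    refine h1.congr_deriv ?_
    simp [L, T]
  have hTc : ContinuousOn (fun p : ℝ × ℝ => T p.1 p.2) (M ×ˢ univ) := by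
    refine hGc.clm_apply ?_
    have : ContinuousOn (fun x => w x y0) M := fun x hx => (hv x hx).continuousAt.continuousWithinAt
    exact this.comp continuousOn_fst fun p hp => hp.1
  have hTd : ∀ x ∈ M, ∀ y ∈ Ioo y0 y1, HasFDerivAt (fun p : ℝ × ℝ => T p.1 p.2)
      (-(ω (x, y)).flip (T x y)) (x, y) := by
    intro x hx y hy
    have hnb : M ×ˢ Ioo y0 y1 ∈ nhds (x, y) := (hMo.prod isOpen_Ioo).mem_nhds ⟨hx, hy⟩
    have hTca : ContinuousAt (fun p : ℝ × ℝ => T p.1 p.2) (x, y) :=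
      hTc.continuousAt ((hMo.prod isOpen_univ).mem_nhds ⟨hx, mem_univ _⟩)
    have hωa : ContinuousAt ω (x, y) :=
      hω.continuousOn.continuousAt (hU.mem_nhds ⟨hx, hIJ (Ioo_subset_Icc_self hy)⟩)
    have hcc : ∀ e : ℝ × ℝ, ContinuousAt (fun p : ℝ × ℝ =>
        ContinuousLinearMap.toSpanSingleton ℝ (-(ω p e (T p.1 p.2)))) (x, y) := by
      intro e
      have h1 : ContinuousAt (fun p : ℝ × ℝ => -(ω p e (T p.1 p.2))) (x, y) :=
        ((hωa.clm_apply continuousAt_const).clm_apply hTca).neg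
      exact (ContinuousLinearMap.toSpanSingletonCLE (𝕜 := ℝ) (E := Fin r → ℝ)).continuous.continuousAt.comp h1
    have := hasStrictFDerivAt_uncurry_coprod (𝕜 := ℝ) (u := (x, y)) (f := T)
      (f₁ := fun x y => ContinuousLinearMap.toSpanSingleton ℝ (-(ω (x, y) (1, 0) (T x y))))
      (f₂ := fun x y => ContinuousLinearMap.toSpanSingleton ℝ (-(ω (x, y) (0, 1) (T x y))))
      (by
        filter_upwards [hnb] with p hp
        exact (hTx p.1 hp.1 p.2 (Ioo_subset_Icc_self hp.2)).hasFDerivAt)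
      (by
        filter_upwards [hnb] with p hp
        exact (hTy p.1 hp.1 p.2 hp.2).hasFDerivAt)
      (hcc (1, 0)) (hcc (0, 1))
    refine this.hasFDerivAt.congr_fderiv ?_
    refine ContinuousLinearMap.ext fun ⟨s, t⟩ => ?_
    have hst : ((s, t) : ℝ × ℝ) = s • (1, 0) + t • (0, 1) := by simp
    simp only [neg_apply, ContinuousLinearMap.flip_apply, ContinuousLinearMap.coprod_apply]
    conv_rhs => rw [hst, map_add, map_smul, map_smul]
    simp [Function.HasUncurry.uncurry]
    abel
  -- the extension
  let τ : ℝ × ℝ → Fin r → ℝ := fun p => if p.2 ∈ Ioo y0 y1 then T p.1 p.2 else σ p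
  have hτσ : ∀ p ∈ (M ×ˢ J) \ Fbar, τ p = σ p := by
    rintro ⟨x, y⟩ hp
    by_cases hy : y ∈ Ioo y0 y1
    · simp only [τ, hy, if_true]
      exact hTσ x hp.1.1 y (Ioo_subset_Icc_self hy) hp
    · simp only [τ, hy, if_false]
  refine ⟨τ, ?_, hτσ⟩
  rintro ⟨x, y⟩ ⟨hx, hyJ⟩
  by_cases hy : y ∈ Ioo y0 y1
  · have h1 : τ (x, y) = T x y := by simp only [τ, hy, if_true]
    rw [h1]
    refine (hTd x hx y hy).congr_of_eventuallyEq ?_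
    filter_upwards [(hMo.prod isOpen_Ioo).mem_nhds (show (x, y) ∈ M ×ˢ Ioo y0 y1 from ⟨hx, hy⟩)] with p hp
    have := hp.2
    simp only [τ, this, if_true]
  · have hyK : y ∉ K := fun h => hy (hKI y h)
    have hp : (x, y) ∈ (M ×ˢ J) \ Fbar := off hx hyJ (Or.inr (Or.inl hyK))
    rw [hτσ _ hp]
    refine (hσ _ hp).congr_of_eventuallyEq ?_
    have ho : IsOpen (M ×ˢ (J ∩ Kᶜ)) := hMo.prod (hJo.inter hK.isClosed.isOpen_compl)
    filter_upwards [ho.mem_nhds (show (x, y) ∈ M ×ˢ (J ∩ Kᶜ) from ⟨hx, hyJ, hyK⟩)] with q hq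
    exact hτσ q (off hq.1 hq.2.1 (Or.inr (Or.inl hq.2.2)))
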